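/- arXiv:2003.05876 — 3 statements merged into one kernel-verified Lean document; each statement's English description precedes it below -/
import Mathlib

section
/- For every integer N ≥ 1, the matrix identity H_BH(1)·Q_BH = Q_BH·J holds, i.e. the transition matrix Q_BH intertwines the exceptional-point Bose–Hubbard Hamiltonian H_BH(1) with the nilpotent Jordan block J. -/
/-!
Put `n = N - 1` and `s k = √(binom(n,k))`. The couplings satisfy `g k * s (k+1) = (n-k) * s k` and
`g k * s k = (k+1) * s (k+1)`, so conjugation by `D` turns `H_BH(1)` into `-i` times an integer
tridiagonal matrix `T`. Row `k` of `P` lists the coefficients of `f = (1+X)^(n-k)`, and the rows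
combined by row `k` of `T` add up to `n X f - X² f'`; hence `T * P = P * W`, where `W` moves the
coefficient of `X^q` to `X^(q+1)` with weight `n - q`. The factorials in `G` finally rescale the
weighted shift `-i W` to `J`.
-/

open Matrix Polynomial Finset

/-- off-diagonal coupling `√((N−1−k)(k+1))`. -/
noncomputable def gCoup (N k : ℕ) : ℝ := Real.sqrt (((N - 1 - k) * (k + 1) : ℕ))

/-- the non-Hermitian Bose–Hubbard Hamiltonian `H_BH(z)`. -/
noncomputable def HBH (N : ℕ) (z : ℂ) : Matrix (Fin N) (Fin N) ℂ :=
  fun k l =>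
    if (k : ℕ) = (l : ℕ) then -Complex.I * (((N : ℤ) - 1 - 2 * (k : ℕ) : ℤ) : ℂ) * z
    else if (l : ℕ) = (k : ℕ) + 1 then (gCoup N k : ℂ)
    else if (k : ℕ) = (l : ℕ) + 1 then (gCoup N l : ℂ)
    else 0

/-- the EP limit of the discrete anharmonic-oscillator Hamiltonian `H_AO`. -/
noncomputable def HAO (N : ℕ) : Matrix (Fin N) (Fin N) ℂ :=
  fun k l =>
    if (k : ℕ) = (l : ℕ) then -(((N : ℤ) - 1 - 2 * (k : ℕ) : ℤ) : ℂ)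
    else if (l : ℕ) = (k : ℕ) + 1 then (gCoup N k : ℂ)
    else if (k : ℕ) = (l : ℕ) + 1 then -(gCoup N l : ℂ)
    else 0

/-- the nilpotent Jordan block `J`. -/
noncomputable def Jmat (N : ℕ) : Matrix (Fin N) (Fin N) ℂ :=
  fun k l => if (l : ℕ) = (k : ℕ) + 1 then 1 else 0

/-- the Pascal-triangle matrix `P`. -/
noncomputable def Pmat (N : ℕ) : Matrix (Fin N) (Fin N) ℂ :=
  fun m q => ((N - 1 - (m : ℕ)).choose (q : ℕ) : ℂ)

/-- the diagonal factor `D` with `D_{k,k} = i^k·√(binom(N−1,k))`. -/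
noncomputable def Dmat (N : ℕ) : Matrix (Fin N) (Fin N) ℂ :=
  Matrix.diagonal fun k => Complex.I ^ (k : ℕ) * (Real.sqrt ((N - 1).choose (k : ℕ)) : ℂ)

/-- the diagonal factor `G` with `G_{k,k} = (−i)^{N−1−k}·(N−1−k)!`. -/
noncomputable def Gmat (N : ℕ) : Matrix (Fin N) (Fin N) ℂ :=
  Matrix.diagonal fun k => (-Complex.I) ^ (N - 1 - (k : ℕ)) * ((N - 1 - (k : ℕ)).factorial : ℂ)

/-- the Bose–Hubbard transition matrix `Q_BH = D·P·G`. -/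
noncomputable def QBH (N : ℕ) : Matrix (Fin N) (Fin N) ℂ := Dmat N * Pmat N * Gmat N

/-- the diagonal factor `C` with `C_{k,k} = √(binom(N−1,k))`. -/
noncomputable def Cmat (N : ℕ) : Matrix (Fin N) (Fin N) ℂ :=
  Matrix.diagonal fun k => (Real.sqrt ((N - 1).choose (k : ℕ)) : ℂ)

/-- the diagonal factor `F` with `F_{k,k} = (−1)^{N−1−k}·(N−1−k)!`. -/
noncomputable def Fmat (N : ℕ) : Matrix (Fin N) (Fin N) ℂ :=
  Matrix.diagonal fun k => (-1 : ℂ) ^ (N - 1 - (k : ℕ)) * ((N - 1 - (k : ℕ)).factorial : ℂ)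

/-- the anharmonic-oscillator transition matrix `Q_AO = C·P·F`. -/
noncomputable def QAO (N : ℕ) : Matrix (Fin N) (Fin N) ℂ := Cmat N * Pmat N * Fmat N

/-- `β = −1 + i`. -/
noncomputable def betaC : ℂ := -1 + Complex.I

/-- the diagonal factor `B` with `B_{k,k} = (−β)^{−k}`. -/
noncomputable def Bmat (N : ℕ) : Matrix (Fin N) (Fin N) ℂ :=
  Matrix.diagonal fun k => ((-betaC) ^ (k : ℕ))⁻¹

/-- the diagonal factor `A` with `A_{k,k} = β^k`. -/
noncomputable def Amat (N : ℕ) : Matrix (Fin N) (Fin N) ℂ :=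
  Matrix.diagonal fun k => betaC ^ (k : ℕ)

/-- the upper-triangular real matrix `R` with
`R_{n,n+q} = √(binom(n+q,n)·binom(N−1−n,q))`. -/
noncomputable def Rmat (N : ℕ) : Matrix (Fin N) (Fin N) ℂ :=
  fun n k =>
    if (n : ℕ) ≤ (k : ℕ) then
      (Real.sqrt (((k : ℕ).choose (n : ℕ)) * ((N - 1 - (n : ℕ)).choose ((k : ℕ) - (n : ℕ)))) : ℂ)
    else 0

/-- the transition-matrix product `S = B·R·A`. -/
noncomputable def Smat (N : ℕ) : Matrix (Fin N) (Fin N) ℂ := Bmat N * Rmat N * Amat N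

/-- the discrete anharmonic-oscillator Hamiltonian `H_AO(γ)` with coupling parameter `γ`. -/
noncomputable def HAOg (N : ℕ) (γ : ℝ) : Matrix (Fin N) (Fin N) ℝ :=
  fun k l =>
    if (k : ℕ) = (l : ℕ) then -((N : ℝ) - 1 - 2 * (k : ℕ))
    else if (l : ℕ) = (k : ℕ) + 1 then
      Real.sqrt ((((N - 1 - (k : ℕ)) * ((k : ℕ) + 1) : ℕ)) * (1 - γ))
    else if (k : ℕ) = (l : ℕ) + 1 then
      -Real.sqrt ((((N - 1 - (l : ℕ)) * ((l : ℕ) + 1) : ℕ)) * (1 - γ))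
    else 0

/-- the exchange (parity) matrix `Π`. -/
noncomputable def PiMat (N : ℕ) : Matrix (Fin N) (Fin N) ℂ :=
  fun k l => if (k : ℕ) + (l : ℕ) = N - 1 then 1 else 0

section Scalar

lemma sqrt_mul_mul_sqrt_of_mul_eq {a b x y : ℝ} (ha : 0 ≤ a) (hb : 0 ≤ b) (h : b * y = a * x) :
    √(a * b) * √y = a * √x := by
  calc √(a * b) * √y = √(a * b * y) := (Real.sqrt_mul (mul_nonneg ha hb) y).symm
    _ = √(a * a * x) := by rw [mul_assoc, h, mul_assoc]
    _ = a * √x := by rw [Real.sqrt_mul (mul_self_nonneg a), Real.sqrt_mul_self ha]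

lemma cast_tsub_one_tsub (R : Type*) [AddGroupWithOne R] {N k : ℕ} (hk : k < N) :
    ((N - 1 - k : ℕ) : R) = (N : R) - 1 - k := by
  rw [Nat.cast_sub (by omega), Nat.cast_pred (by omega)]

variable (R : Type*) [CommRing R]

lemma cast_choose_mul_cast_tsub (a q : ℕ) :
    (a.choose q : R) * ((a - q : ℕ) : R) = a.choose q * ((a : R) - q) := by
  obtain hq | hq := le_or_gt q a
  · rw [Nat.cast_sub hq]
  · simp [Nat.choose_eq_zero_of_lt hq]

lemma cast_choose_succ_right_mul (a q : ℕ) :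
    (a.choose (q + 1) : R) * (q + 1) = a.choose q * ((a : R) - q) := by
  rw [← cast_choose_mul_cast_tsub]
  exact_mod_cast congrArg (Nat.cast (R := R)) (Nat.choose_succ_right_eq a q)

lemma cast_mul_choose_pred (a q : ℕ) :
    (a : R) * (a - 1).choose q = a.choose q * ((a : R) - q) := by
  rw [← cast_choose_mul_cast_tsub]
  cases a with
  | zero => simp
  | succ b =>
    rw [mul_comm]
    exact_mod_cast congrArg (Nat.cast (R := R)) (Nat.choose_mul_succ_eq b q)

lemma cast_choose_three_term (a k q : ℕ) :
    ((a : R) - k) * a.choose (q + 1) - a * (a - 1).choose (q + 1) + k * (a + 1).choose (q + 1)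
      = a.choose q * ((a : R) + k - q) := by
  have pascal : ((a + 1).choose (q + 1) : R) = a.choose q + a.choose (q + 1) := by
    rw [Nat.choose_succ_succ', Nat.cast_add]
  have absorption := cast_mul_choose_pred R a (q + 1)
  have shift := cast_choose_succ_right_mul R a q
  push_cast at absorption
  linear_combination k * pascal - absorption + shift

end Scalar

section Shift

variable {N : ℕ} {m : Type*}

lemma Jmat_mul_apply (A : Matrix (Fin N) m ℂ) (k : Fin N) (q : m) :
    (Jmat N * A) k q = if h : (k : ℕ) + 1 < N then A ⟨k + 1, h⟩ q else 0 := by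
  rw [Matrix.mul_apply]
  split_ifs with h
  · rw [Finset.sum_eq_single ⟨k + 1, h⟩] <;> simp +contextual [Jmat, Fin.ext_iff]
  · refine Finset.sum_eq_zero fun l _ => ?_
    have hl : (l : ℕ) ≠ k + 1 := by omega
    simp [Jmat, hl]

lemma mul_Jmat_apply (A : Matrix m (Fin N) ℂ) (k : m) (q : Fin N) :
    (A * Jmat N) k q = if (q : ℕ) = 0 then 0 else A k ⟨q - 1, by omega⟩ := by
  rw [Matrix.mul_apply]
  split_ifs with h
  · simp [Jmat, h]
  · have hq (j : Fin N) : (q : ℕ) = j + 1 ↔ j = ⟨q - 1, by omega⟩ := by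
      simp only [Fin.ext_iff]
      omega
    simp [Jmat, hq]

lemma Jmat_transpose_mul_apply (A : Matrix (Fin N) m ℂ) (k : Fin N) (q : m) :
    ((Jmat N)ᵀ * A) k q = if (k : ℕ) = 0 then 0 else A ⟨k - 1, by omega⟩ q := by
  rw [← Matrix.transpose_transpose A, ← Matrix.transpose_mul]
  exact mul_Jmat_apply Aᵀ q k

end Shift

section Intertwining

variable (N : ℕ)

/-- The tridiagonal matrix `T(z)` with `D⁻¹ H_BH(z) D = -i T(z)`. Its entries have no square roots:
`(N-1-2k) z` on the diagonal, `-(N-1-k)` to the right of it and `k` to the left. -/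
noncomputable def binomialTridiagonal (z : ℂ) : Matrix (Fin N) (Fin N) ℂ :=
  diagonal (fun k : Fin N => ((N : ℂ) - 1 - 2 * (k : ℕ)) * z)
    - diagonal (fun k : Fin N => (N : ℂ) - 1 - (k : ℕ)) * Jmat N
    + diagonal (fun k : Fin N => ((k : ℕ) : ℂ)) * (Jmat N)ᵀ

/-- The superdiagonal matrix `W = P⁻¹ T(1) P`, with entries `W_{k,k+1} = N-1-k`. -/
noncomputable def weightedShift : Matrix (Fin N) (Fin N) ℂ :=
  diagonal (fun k : Fin N => (N : ℂ) - 1 - (k : ℕ)) * Jmat N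

lemma gCoup_mul_sqrt_choose_succ (k : ℕ) :
    gCoup N k * √((N - 1).choose (k + 1)) = ((N - 1 - k : ℕ) : ℝ) * √((N - 1).choose k) := by
  rw [gCoup, Nat.cast_mul]
  refine sqrt_mul_mul_sqrt_of_mul_eq (Nat.cast_nonneg _) (Nat.cast_nonneg _) ?_
  rw [mul_comm, mul_comm ((N - 1 - k : ℕ) : ℝ)]
  exact_mod_cast Nat.choose_succ_right_eq (N - 1) k

lemma gCoup_mul_sqrt_choose (k : ℕ) :
    gCoup N k * √((N - 1).choose k) = ((k + 1 : ℕ) : ℝ) * √((N - 1).choose (k + 1)) := by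
  rw [gCoup, mul_comm (N - 1 - k), Nat.cast_mul]
  refine sqrt_mul_mul_sqrt_of_mul_eq (Nat.cast_nonneg _) (Nat.cast_nonneg _) ?_
  rw [mul_comm, mul_comm ((k + 1 : ℕ) : ℝ)]
  exact_mod_cast (Nat.choose_succ_right_eq (N - 1) k).symm

variable {N}

lemma binomialTridiagonal_apply (z : ℂ) (k l : Fin N) :
    binomialTridiagonal N z k l
      = if (k : ℕ) = l then ((N : ℂ) - 1 - 2 * (k : ℕ)) * z
        else if (l : ℕ) = k + 1 then -((N : ℂ) - 1 - (k : ℕ))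
        else if (k : ℕ) = l + 1 then ((k : ℕ) : ℂ)
        else 0 := by
  simp only [binomialTridiagonal, Jmat, Matrix.add_apply, Matrix.sub_apply, diagonal_mul,
    diagonal_apply, transpose_apply, Fin.ext_iff]
  split_ifs <;> first | omega | simp

lemma HBH_mul_Dmat (z : ℂ) :
    HBH N z * Dmat N = Dmat N * (-Complex.I • binomialTridiagonal N z) := by
  ext k l
  rw [Dmat, mul_diagonal, diagonal_mul, Matrix.smul_apply, binomialTridiagonal_apply, smul_eq_mul,
    HBH]
  split_ifs with hdiag hright hleft
  · rw [hdiag]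
    push_cast
    ring
  · have coupling : (gCoup N k : ℂ) * (√((N - 1).choose (k + 1)) : ℝ)
        = ((N : ℂ) - 1 - (k : ℕ)) * (√((N - 1).choose k) : ℝ) := by
      rw [← cast_tsub_one_tsub ℂ k.isLt]
      exact_mod_cast gCoup_mul_sqrt_choose_succ N k
    rw [hright]
    linear_combination Complex.I ^ ((k : ℕ) + 1) * coupling
  · have coupling : (gCoup N l : ℂ) * (√((N - 1).choose l) : ℝ)
        = ((l + 1 : ℕ) : ℂ) * (√((N - 1).choose (l + 1)) : ℝ) := by
      exact_mod_cast gCoup_mul_sqrt_choose N l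
    rw [hleft]
    linear_combination Complex.I ^ (l : ℕ) * coupling
      + Complex.I ^ (l : ℕ) * (√((N - 1).choose (l + 1)) : ℝ) * ((l + 1 : ℕ) : ℂ) * Complex.I_sq
  · simp

/-- For the last `k` the row of `J * P` is zero while the truncated `binom(0 - 1, 0)` is `1`; the
factor `N - 1 - k = 0` reconciles the two. -/
lemma mul_Jmat_mul_Pmat_apply (k q : Fin N) :
    ((N - 1 - k : ℕ) : ℂ) * (Jmat N * Pmat N) k q
      = ((N - 1 - k : ℕ) : ℂ) * (N - 1 - k - 1).choose q := by
  rw [Jmat_mul_apply]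
  split_ifs with h
  · simp [Pmat, show N - 1 - ((k : ℕ) + 1) = N - 1 - k - 1 by omega]
  · simp [show N - 1 - (k : ℕ) = 0 by omega]

lemma mul_Jmat_transpose_mul_Pmat_apply (k q : Fin N) :
    ((k : ℕ) : ℂ) * ((Jmat N)ᵀ * Pmat N) k q = (k : ℕ) * (N - 1 - k + 1).choose q := by
  rw [Jmat_transpose_mul_apply]
  split_ifs with h
  · simp [h]
  · simp [Pmat, show N - 1 - ((k : ℕ) - 1) = N - 1 - k + 1 by omega]

lemma binomialTridiagonal_mul_Pmat_apply (z : ℂ) (k q : Fin N) :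
    (binomialTridiagonal N z * Pmat N) k q
      = ((N : ℂ) - 1 - 2 * (k : ℕ)) * z * (N - 1 - k).choose q
        - ((N - 1 - k : ℕ) : ℂ) * (N - 1 - k - 1).choose q
        + (k : ℕ) * (N - 1 - k + 1).choose q := by
  simp only [binomialTridiagonal, Matrix.add_mul, Matrix.sub_mul, Matrix.mul_assoc,
    Matrix.add_apply, Matrix.sub_apply, diagonal_mul]
  rw [← cast_tsub_one_tsub ℂ k.isLt, mul_Jmat_mul_Pmat_apply, mul_Jmat_transpose_mul_Pmat_apply,
    Pmat]

lemma binomialTridiagonal_one_mul_Pmat :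
    binomialTridiagonal N 1 * Pmat N = Pmat N * weightedShift N := by
  ext k ⟨q, hq⟩
  have diagonal_entry : ((N : ℂ) - 1 - 2 * (k : ℕ)) * 1 = ((N - 1 - k : ℕ) : ℂ) - (k : ℕ) := by
    rw [cast_tsub_one_tsub ℂ k.isLt]
    ring
  rw [binomialTridiagonal_mul_Pmat_apply, diagonal_entry, weightedShift, ← Matrix.mul_assoc,
    mul_Jmat_apply]
  cases q with
  | zero => simp
  | succ q =>
    rw [cast_choose_three_term, cast_tsub_one_tsub ℂ k.isLt, if_neg q.succ_ne_zero, mul_diagonal]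
    simp only [Pmat, Nat.add_sub_cancel]
    ring

lemma weightedShift_mul_Gmat :
    (-Complex.I • weightedShift N) * Gmat N = Gmat N * Jmat N := by
  ext k l
  rw [Gmat, mul_diagonal, diagonal_mul, Matrix.smul_apply, weightedShift, diagonal_mul,
    ← cast_tsub_one_tsub ℂ k.isLt]
  by_cases h : (l : ℕ) = k + 1
  · rw [show N - 1 - (k : ℕ) = N - 1 - l + 1 by omega, pow_succ, Nat.factorial_succ, Nat.cast_mul,
      smul_eq_mul]
    ring
  · simp [Jmat, h]

end Intertwining

/-- `H_BH(1)·Q_BH = Q_BH·J`. -/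
theorem bh_intertwining (N : ℕ) (hN : 1 ≤ N) :
    HBH N 1 * QBH N = QBH N * Jmat N := by
  calc HBH N 1 * QBH N
      = HBH N 1 * Dmat N * Pmat N * Gmat N := by simp only [QBH, Matrix.mul_assoc]
    _ = Dmat N * (-Complex.I • (binomialTridiagonal N 1 * Pmat N)) * Gmat N := by
      rw [HBH_mul_Dmat, Matrix.mul_assoc (Dmat N), Matrix.smul_mul]
    _ = Dmat N * (-Complex.I • (Pmat N * weightedShift N)) * Gmat N := by
      rw [binomialTridiagonal_one_mul_Pmat]
    _ = QBH N * Jmat N := by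
      rw [← Matrix.mul_smul, QBH]
      simp only [Matrix.mul_assoc, weightedShift_mul_Gmat]
end

section
/- For every integer N ≥ 1, the transition matrix Q_AO is invertible; in fact det Q_AO = ∏_{k=0}^{N−1} ( k! · √(binom(N−1,k)) ), which is positive. -/
open Matrix Polynomial Finset

/-!
Reversing the order of the columns of the Pascal matrix `P` makes it upper unitriangular, so
`det P` is the sign of the order reversal, `(-1) ^ (N * (N - 1) / 2)`. The signs in the diagonal
matrix `F` multiply to the same number, so the two cancel in `det C * det P * det F`.
-/

lemma sign_revPerm (n : ℕ) :
    Equiv.Perm.sign (Fin.revPerm : Equiv.Perm (Fin n)) = (-1) ^ (n * (n - 1) / 2) := by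
  have all_inverted (j : Fin n) :
      ∏ i ∈ Iio j, (if (Fin.revPerm i : Fin n) < Fin.revPerm j then 1 else -1 : ℤˣ) =
        (-1) ^ (j : ℕ) := by
    rw [prod_congr rfl fun i hi => if_neg (by simpa using (mem_Iio.1 hi).le), prod_const,
      Fin.card_Iio]
  rw [Equiv.Perm.sign_eq_prod_prod_Iio, prod_congr rfl fun j _ => all_inverted j,
    prod_pow_eq_pow_sum, Fin.sum_univ_eq_sum_range (fun k => k), sum_range_id]

lemma det_of_zero_below_antidiagonal {R : Type*} [CommRing R] {n : ℕ}
    (M : Matrix (Fin n) (Fin n) R) (hM : ∀ i j, i.rev < j → M i j = 0) :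
    M.det = (-1) ^ (n * (n - 1) / 2) * ∏ i, M i i.rev := by
  let T : Matrix (Fin n) (Fin n) R := M.submatrix id Fin.revPerm
  have hT : T.IsUpperTriangular := fun i j hji => hM i j.rev (Fin.rev_lt_rev.2 hji)
  have hMT : M = T.submatrix id Fin.revPerm := by
    ext i j
    simp [T]
  calc M.det = (Equiv.Perm.sign (Fin.revPerm : Equiv.Perm (Fin n)) : R) * T.det := by
        rw [hMT, det_permute']
    _ = (-1) ^ (n * (n - 1) / 2) * ∏ i, M i i.rev := by
        rw [sign_revPerm, det_of_isUpperTriangular hT]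
        simp [T]

lemma det_Pmat (N : ℕ) : (Pmat N).det = (-1) ^ (N * (N - 1) / 2) := by
  have below_antidiagonal (i j : Fin N) (hij : i.rev < j) : Pmat N i j = 0 := by
    rw [Fin.lt_def, Fin.val_rev] at hij
    rw [Pmat, Nat.choose_eq_zero_of_lt (by omega), Nat.cast_zero]
  have on_antidiagonal (i : Fin N) : Pmat N i i.rev = 1 := by
    rw [Pmat, Fin.val_rev, Nat.sub_sub, Nat.add_comm 1, Nat.choose_self, Nat.cast_one]
  simp only [det_of_zero_below_antidiagonal _ below_antidiagonal, on_antidiagonal,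
    prod_const_one, mul_one]

lemma det_Cmat (N : ℕ) :
    (Cmat N).det = ∏ k ∈ range N, (Real.sqrt ((N - 1).choose k) : ℂ) := by
  rw [Cmat, det_diagonal,
    Fin.prod_univ_eq_prod_range (fun k => (Real.sqrt ((N - 1).choose k) : ℂ))]

lemma det_Fmat (N : ℕ) :
    (Fmat N).det = (-1) ^ (N * (N - 1) / 2) * ∏ k ∈ range N, (k.factorial : ℂ) := by
  rw [Fmat, det_diagonal,
    Fin.prod_univ_eq_prod_range fun k => (-1 : ℂ) ^ (N - 1 - k) * ((N - 1 - k).factorial : ℂ),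
    prod_range_reflect fun k => (-1 : ℂ) ^ k * (k.factorial : ℂ),
    prod_mul_distrib, prod_pow_eq_pow_sum, sum_range_id]

lemma det_QAO (N : ℕ) :
    (QAO N).det =
      ((∏ k ∈ range N, ((k.factorial : ℝ) * Real.sqrt ((N - 1).choose k)) : ℝ) : ℂ) := by
  have signs_cancel : (-1 : ℂ) ^ (N * (N - 1) / 2) * (-1) ^ (N * (N - 1) / 2) = 1 := by
    rw [← mul_pow, neg_one_mul, neg_neg, one_pow]
  rw [QAO, det_mul, det_mul, det_Cmat, det_Pmat, det_Fmat, mul_assoc, ← mul_assoc (_ ^ _),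
    signs_cancel, one_mul, mul_comm, ← prod_mul_distrib]
  push_cast
  rfl

lemma prod_factorial_mul_sqrt_choose_pos (N : ℕ) :
    0 < ∏ k ∈ range N, ((k.factorial : ℝ) * Real.sqrt ((N - 1).choose k)) := by
  refine prod_pos fun k hk => mul_pos (mod_cast k.factorial_pos) (Real.sqrt_pos.2 ?_)
  exact_mod_cast Nat.choose_pos (Nat.le_sub_one_of_lt (mem_range.1 hk))

/-- `Q_AO` is invertible, with explicit positive determinant. -/
theorem qao_det_invertible (N : ℕ) (hN : 1 ≤ N) :
    (QAO N).det =
        ((∏ k ∈ Finset.range N, ((k.factorial : ℝ) * Real.sqrt ((N - 1).choose k)) : ℝ) : ℂ) ∧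
      0 < ∏ k ∈ Finset.range N, ((k.factorial : ℝ) * Real.sqrt ((N - 1).choose k)) ∧
      IsUnit (QAO N) := by
  have det_pos := prod_factorial_mul_sqrt_choose_pos N
  refine ⟨det_QAO N, det_pos, ?_⟩
  rw [isUnit_iff_isUnit_det, isUnit_iff_ne_zero, det_QAO]
  exact_mod_cast det_pos.ne'
end

section
/- For every integer N ≥ 1, the matrix identity S·H_BH(1) = H_AO·S holds; equivalently, since S is invertible, H_AO = S·H_BH(1)·S⁻¹, so the explicit upper-triangular matrix S mediates the one-to-one correspondence between the real asymmetric exceptional-point Hamiltonian H_AO and the complex symmetric exceptional-point Hamiltonian H_BH(1). -/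
/-!
Write a vector `v` as the polynomial `∑ √(binom(N-1,k)) v_k X^k`. With these weights
both Hamiltonians become first-order differential operators `(u - 2dX - lX²)∂ + (N-1)(d + lX)` of
the spin-`(N-1)/2` representation of `sl₂`, while the factors `A`, `R`, `B` become the
substitutions `X ↦ βX`, `X ↦ X + 1`, `X ↦ -β⁻¹X`. Hence `S` is the
involution `X ↦ β - X`, and the chain rule shows that it carries the operator of `H_BH(1)`, with
leading coefficient `(1 + iX)²`, to that of `H_AO`, with leading coefficient `(1 + X)²`.
-/

open Matrix Polynomial Finset

section DifferentialOperators

variable {R : Type*} [CommRing R]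

/-- The operator `p ↦ (u - 2dX - lX²)p' + m(d + lX)p`, by which the element of `sl₂` with diagonal,
upper and lower parts `d`, `u`, `l` acts on polynomials in the representation of spin `m/2`. -/
noncomputable def spinOperator (m d u l : R) : Module.End R R[X] :=
  LinearMap.mulLeft R (C u - C (2 * d) * X - C l * X ^ 2) * derivative +
    LinearMap.mulLeft R (C m * (C d + C l * X))

lemma spinOperator_monomial (m d u l a : R) (k : ℕ) :
    spinOperator m d u l (monomial k a) =
      monomial k (d * (m - 2 * k) * a) + u • monomial (k - 1) (k * a) +
        l • monomial (k + 1) ((m - k) * a) := by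
  simp only [spinOperator, Module.End.mul_apply, LinearMap.add_apply, LinearMap.mulLeft_apply,
    derivative_C_mul_X_pow, smul_eq_C_mul, ← C_mul_X_pow_eq_monomial, map_mul, map_sub, map_ofNat,
    map_natCast]
  rcases k with _ | k
  · rw [Nat.cast_zero]
    ring
  · rw [Nat.add_sub_cancel]
    ring

/-- The substitution `p(X) ↦ p(sX + t)`. -/
noncomputable def affineSubst (s t : R) : Module.End R R[X] :=
  (aeval (C s * X + C t)).toLinearMap

lemma affineSubst_apply (s t : R) (p : R[X]) : affineSubst s t p = p.comp (C s * X + C t) := rfl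

lemma affineSubst_one_zero : affineSubst (1 : R) 0 = 1 := by
  refine LinearMap.ext fun p => ?_
  rw [affineSubst_apply, map_one, one_mul, map_zero, add_zero, comp_X, Module.End.one_apply]

lemma affineSubst_mul_affineSubst (s t s' t' : R) :
    affineSubst s t * affineSubst s' t' = affineSubst (s' * s) (s' * t + t') := by
  refine LinearMap.ext fun p => ?_
  rw [Module.End.mul_apply, affineSubst_apply, affineSubst_apply, affineSubst_apply, comp_assoc]
  congr 1
  simp only [add_comp, mul_comp, C_comp, X_comp, map_add, map_mul]
  ring

lemma affineSubst_mul_spinOperator (m d u l s t : R) {d' u' : R}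
    (hd : d' = d + l * t) (hu : u' * s = u - 2 * d * t - l * t ^ 2) :
    affineSubst s t * spinOperator m d u l = spinOperator m d' u' (l * s) * affineSubst s t := by
  refine LinearMap.ext fun p => ?_
  have hC : C u' * C s = C u - 2 * C d * C t - C l * C t ^ 2 := by
    simpa only [map_sub, map_mul, map_pow, map_ofNat] using congrArg C hu
  simp only [spinOperator, Module.End.mul_apply, LinearMap.add_apply, LinearMap.mulLeft_apply,
    affineSubst_apply, derivative_comp, add_comp, sub_comp, mul_comp, pow_comp, C_comp, X_comp,
    derivative_C_mul, derivative_X, derivative_C, hd, map_add, map_mul, map_ofNat, ofNat_comp]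
  linear_combination -(derivative p).comp (C s * X + C t) * hC

end DifferentialOperators

section Weights

lemma sqrt_natCast_mul_sqrt_natCast {a b c r : ℕ} (h : a * b = r ^ 2 * c) :
    √(a : ℝ) * √(b : ℝ) = r * √(c : ℝ) := by
  rw [← Real.sqrt_mul a.cast_nonneg, ← Nat.cast_mul, h, Nat.cast_mul, Nat.cast_pow,
    Real.sqrt_mul (sq_nonneg _), Real.sqrt_sq r.cast_nonneg]

/-- The weight `√(binom(M,k))`, as a complex number, of the monomial `X^k` in the spin-`M/2`
representation. -/
noncomputable def sqrtChoose (M k : ℕ) : ℂ := (√(M.choose k : ℝ) : ℂ)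

lemma sqrtChoose_ne_zero {M k : ℕ} (hk : k ≤ M) : sqrtChoose M k ≠ 0 := by
  have hpos : (0 : ℝ) < M.choose k := mod_cast Nat.choose_pos hk
  exact Complex.ofReal_ne_zero.2 (Real.sqrt_ne_zero'.2 hpos)

lemma sqrtChoose_mul_gCoup (N k : ℕ) :
    sqrtChoose (N - 1) k * gCoup N k = (k + 1 : ℕ) * sqrtChoose (N - 1) (k + 1) := by
  have h : (N - 1).choose k * ((N - 1 - k) * (k + 1)) = (k + 1) ^ 2 * (N - 1).choose (k + 1) := by
    rw [← mul_assoc, ← Nat.choose_succ_right_eq]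
    ring
  have hsqrt := sqrt_natCast_mul_sqrt_natCast h
  rw [sqrtChoose, sqrtChoose, gCoup]
  exact_mod_cast hsqrt

lemma sqrtChoose_succ_mul_gCoup (N k : ℕ) :
    sqrtChoose (N - 1) (k + 1) * gCoup N k = (N - 1 - k : ℕ) * sqrtChoose (N - 1) k := by
  have h : (N - 1).choose (k + 1) * ((N - 1 - k) * (k + 1)) =
      (N - 1 - k) ^ 2 * (N - 1).choose k := by
    rw [mul_left_comm, Nat.choose_succ_right_eq]
    ring
  have hsqrt := sqrt_natCast_mul_sqrt_natCast h
  rw [sqrtChoose, sqrtChoose, gCoup]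
  exact_mod_cast hsqrt

lemma Rmat_mul_sqrtChoose {N : ℕ} (n k : Fin N) :
    Rmat N n k * sqrtChoose (N - 1) n = (k : ℕ).choose n * sqrtChoose (N - 1) k := by
  rw [Rmat]
  split_ifs with hnk
  · have h : (k : ℕ).choose n * (N - 1 - n).choose (k - n) * (N - 1).choose n =
        (k : ℕ).choose n ^ 2 * (N - 1).choose k := by
      rw [sq, mul_assoc, mul_assoc, mul_comm ((N - 1 - n).choose _), ← Nat.choose_mul hnk,
        mul_comm ((N - 1).choose _)]
    have hsqrt := sqrt_natCast_mul_sqrt_natCast h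
    rw [sqrtChoose, sqrtChoose]
    exact_mod_cast hsqrt
  · rw [Nat.choose_eq_zero_of_lt (not_le.1 hnk), zero_mul, Nat.cast_zero, zero_mul]

end Weights

/-- The polynomial `∑ √(binom(N-1,k)) v_k X^k` encoding the vector `v`. -/
noncomputable def spinPoly (N : ℕ) : (Fin N → ℂ) →ₗ[ℂ] ℂ[X] :=
  Fintype.linearCombination ℂ fun k : Fin N => monomial k (sqrtChoose (N - 1) k)

lemma spinPoly_apply {N : ℕ} (v : Fin N → ℂ) :
    spinPoly N v = ∑ k : Fin N, monomial k (v k * sqrtChoose (N - 1) k) := by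
  simp [spinPoly, Fintype.linearCombination_apply, smul_monomial]

lemma coeff_spinPoly {N : ℕ} (v : Fin N → ℂ) (k : Fin N) :
    (spinPoly N v).coeff k = v k * sqrtChoose (N - 1) k := by
  simp [spinPoly_apply, coeff_monomial, Fin.val_inj]

lemma spinPoly_injective (N : ℕ) : Function.Injective (spinPoly N) := by
  refine fun v w h => funext fun k => ?_
  have hk := congrArg (coeff · (k : ℕ)) h
  simp only [coeff_spinPoly] at hk
  exact mul_right_cancel₀ (sqrtChoose_ne_zero (Nat.le_sub_one_of_lt k.isLt)) hk

/-- The matrix `A` is the matrix of the operator `L` in the basis `√(binom(N-1,k)) X^k` of the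
polynomials of degree less than `N`. -/
def SpinRepresents {N : ℕ} (A : Matrix (Fin N) (Fin N) ℂ) (L : Module.End ℂ ℂ[X]) : Prop :=
  ∀ v, spinPoly N (A *ᵥ v) = L (spinPoly N v)

namespace SpinRepresents

variable {N : ℕ} {A B : Matrix (Fin N) (Fin N) ℂ} {L L' : Module.End ℂ ℂ[X]}

lemma of_col (h : ∀ k : Fin N,
      spinPoly N (A.col k) = L (monomial k (sqrtChoose (N - 1) k))) :
    SpinRepresents A L := by
  suffices spinPoly N ∘ₗ A.mulVecLin = L ∘ₗ spinPoly N from LinearMap.congr_fun this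
  refine LinearMap.pi_ext' fun k => LinearMap.ext_ring ?_
  simpa [spinPoly, Fintype.linearCombination_apply_single] using h k

lemma one : SpinRepresents (1 : Matrix (Fin N) (Fin N) ℂ) 1 := fun v => by
  rw [one_mulVec, Module.End.one_apply]

lemma mul (hA : SpinRepresents A L) (hB : SpinRepresents B L') :
    SpinRepresents (A * B) (L * L') := fun v => by
  rw [← mulVec_mulVec, hA, hB, Module.End.mul_apply]

lemma eq (hA : SpinRepresents A L) (hB : SpinRepresents B L) : A = B :=
  ext_of_mulVec_single fun _ => spinPoly_injective N <| (hA _).trans (hB _).symm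

end SpinRepresents

section Hamiltonians

/-- The superdiagonal matrix of the couplings `√((N-1-k)(k+1))`. -/
noncomputable def couplingMat (N : ℕ) : Matrix (Fin N) (Fin N) ℂ :=
  fun k l => if (l : ℕ) = k + 1 then (gCoup N k : ℂ) else 0

/-- The tridiagonal matrix with diagonal `d(N-1-2k)` whose upper and lower couplings
`√((N-1-k)(k+1))` are multiplied by `u` and `l`; a common form of `H_BH(z)` and `H_AO`. -/
noncomputable def spinHamiltonian (N : ℕ) (d u l : ℂ) : Matrix (Fin N) (Fin N) ℂ :=
  diagonal (fun k : Fin N => d * (N - 1 - 2 * (k : ℕ))) + u • couplingMat N + l • (couplingMat N)ᵀ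

lemma HBH_eq_spinHamiltonian (N : ℕ) (z : ℂ) :
    HBH N z = spinHamiltonian N (-Complex.I * z) 1 1 := by
  ext k l
  simp only [HBH, spinHamiltonian, couplingMat, Matrix.add_apply, Matrix.smul_apply,
    diagonal_apply, transpose_apply, Fin.ext_iff, smul_eq_mul]
  split_ifs <;> first | omega | (push_cast; ring)

lemma HAO_eq_spinHamiltonian (N : ℕ) : HAO N = spinHamiltonian N (-1) 1 (-1) := by
  ext k l
  simp only [HAO, spinHamiltonian, couplingMat, Matrix.add_apply, Matrix.smul_apply,
    diagonal_apply, transpose_apply, Fin.ext_iff, smul_eq_mul]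
  split_ifs <;> first | omega | (push_cast; ring)

lemma spinPoly_col_diagonal {N : ℕ} (f : Fin N → ℂ) (k : Fin N) :
    spinPoly N ((diagonal f).col k) = monomial k (f k * sqrtChoose (N - 1) k) := by
  rw [spinPoly_apply, Fintype.sum_eq_single k fun n hn => by simp [hn]]
  simp

lemma spinPoly_col_couplingMat {N : ℕ} (k : Fin N) :
    spinPoly N ((couplingMat N).col k) = monomial (k - 1) ((k : ℕ) * sqrtChoose (N - 1) k) := by
  obtain ⟨_ | k, hk⟩ := k
  · simp [spinPoly_apply, couplingMat]
  · rw [spinPoly_apply, Fintype.sum_eq_single ⟨k, k.lt_succ_self.trans hk⟩ fun n hn => by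
      simp [couplingMat, Ne.symm (Fin.val_ne_of_ne hn)]]
    simp only [col_apply, couplingMat, if_true, mul_comm (gCoup N k : ℂ), sqrtChoose_mul_gCoup,
      Nat.add_sub_cancel]

lemma spinPoly_col_couplingMat_transpose {N : ℕ} (k : Fin N) :
    spinPoly N ((couplingMat N)ᵀ.col k) =
      monomial (k + 1) ((N - 1 - k : ℕ) * sqrtChoose (N - 1) k) := by
  by_cases hk : (k : ℕ) + 1 < N
  · rw [spinPoly_apply, Fintype.sum_eq_single ⟨k + 1, hk⟩ fun n hn => by
      simp [couplingMat, Fin.val_ne_of_ne hn]]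
    simp only [col_apply, transpose_apply, couplingMat, if_true, mul_comm (gCoup N k : ℂ),
      sqrtChoose_succ_mul_gCoup]
  · have hlast : N - 1 - (k : ℕ) = 0 := by omega
    have hzero (n : Fin N) : (n : ℕ) ≠ k + 1 := by omega
    simp [spinPoly_apply, couplingMat, hlast, hzero]

lemma spinRepresents_spinHamiltonian (N : ℕ) (d u l : ℂ) :
    SpinRepresents (spinHamiltonian N d u l) (spinOperator (N - 1 : ℂ) d u l) := by
  refine .of_col fun k => ?_
  have hcol : (spinHamiltonian N d u l).col k =
      (diagonal fun k : Fin N => d * (N - 1 - 2 * (k : ℕ))).col k +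
        u • (couplingMat N).col k + l • (couplingMat N)ᵀ.col k := rfl
  rw [hcol, map_add, map_add, map_smul, map_smul, spinPoly_col_diagonal, spinPoly_col_couplingMat,
    spinPoly_col_couplingMat_transpose, spinOperator_monomial]
  have hk : ((N - 1 - k : ℕ) : ℂ) = N - 1 - (k : ℕ) := by
    rw [Nat.sub_sub, Nat.cast_sub (by omega)]
    push_cast
    ring
  rw [hk]

end Hamiltonians

section Substitutions

lemma spinRepresents_diagonal_pow (N : ℕ) (s : ℂ) :
    SpinRepresents (diagonal fun k : Fin N => s ^ (k : ℕ)) (affineSubst s 0) := by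
  refine .of_col fun k => ?_
  rw [spinPoly_col_diagonal, affineSubst_apply, map_zero, add_zero, monomial_comp, mul_pow,
    ← C_pow, ← mul_assoc, ← C_mul, C_mul_X_pow_eq_monomial, mul_comm]

lemma spinRepresents_Rmat (N : ℕ) : SpinRepresents (Rmat N) (affineSubst 1 1) := by
  refine .of_col fun k => ?_
  have hdeg : ((X + C 1 : ℂ[X]) ^ (k : ℕ)).natDegree < N := by
    rw [natDegree_pow_X_add_C]
    exact k.isLt
  rw [spinPoly_apply, affineSubst_apply, monomial_comp, map_one, one_mul, ← map_one C,
    as_sum_range' _ N hdeg, ← Fin.sum_univ_eq_sum_range, mul_sum]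
  refine sum_congr rfl fun n _ => ?_
  rw [col_apply, Rmat_mul_sqrtChoose, coeff_X_add_C_pow, one_pow, one_mul, C_mul_monomial,
    mul_comm]

lemma betaC_ne_zero : betaC ≠ 0 := fun h => by
  simpa [betaC] using congrArg Complex.im h

lemma spinRepresents_Smat (N : ℕ) : SpinRepresents (Smat N) (affineSubst (-1) betaC) := by
  have hA : SpinRepresents (Amat N) (affineSubst betaC 0) := spinRepresents_diagonal_pow N betaC
  have hB : SpinRepresents (Bmat N) (affineSubst (-betaC)⁻¹ 0) := by
    simpa only [Bmat, inv_pow] using spinRepresents_diagonal_pow N (-betaC)⁻¹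
  have hS := (hB.mul (spinRepresents_Rmat N)).mul hA
  rw [affineSubst_mul_affineSubst, affineSubst_mul_affineSubst] at hS
  have hscale : betaC * (1 * (-betaC)⁻¹) = -1 := by
    rw [one_mul, inv_neg, mul_neg, mul_inv_cancel₀ betaC_ne_zero]
  rwa [hscale, mul_zero, zero_add, mul_one, add_zero] at hS

lemma Smat_mul_self (N : ℕ) : Smat N * Smat N = 1 := by
  have hS := (spinRepresents_Smat N).mul (spinRepresents_Smat N)
  rw [affineSubst_mul_affineSubst, neg_one_mul, neg_neg, neg_one_mul, neg_add_cancel,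
    affineSubst_one_zero] at hS
  exact hS.eq .one

end Substitutions

lemma affineSubst_betaC_mul_spinOperator (m : ℂ) :
    affineSubst (-1) betaC * spinOperator m (-Complex.I * 1) 1 1 =
      spinOperator m (-1) 1 (-1) * affineSubst (-1) betaC := by
  have hd : -1 = -Complex.I * 1 + 1 * betaC := by
    rw [betaC]; ring
  have hu : 1 * -1 = 1 - 2 * (-Complex.I * 1) * betaC - 1 * betaC ^ 2 := by
    rw [betaC]; linear_combination -Complex.I_sq
  simpa only [one_mul] using affineSubst_mul_spinOperator m _ _ 1 _ _ hd hu

/-- `S·H_BH(1) = H_AO·S`, equivalently `H_AO = S·H_BH(1)·S⁻¹`. -/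
theorem direct_correspondence (N : ℕ) (hN : 1 ≤ N) :
    Smat N * HBH N 1 = HAO N * Smat N ∧
      HAO N = Smat N * HBH N 1 * (Smat N)⁻¹ := by
  have hS := spinRepresents_Smat N
  have hBH := spinRepresents_spinHamiltonian N (-Complex.I * 1) 1 1
  have hAO := spinRepresents_spinHamiltonian N (-1) 1 (-1)
  rw [← HBH_eq_spinHamiltonian] at hBH
  rw [← HAO_eq_spinHamiltonian] at hAO
  have hcomm : Smat N * HBH N 1 = HAO N * Smat N := by
    refine (hS.mul hBH).eq ?_
    rw [affineSubst_betaC_mul_spinOperator]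
    exact hAO.mul hS
  have hdet : IsUnit (Smat N).det := isUnit_det_of_right_inverse (Smat_mul_self N)
  exact ⟨hcomm, by rw [hcomm, mul_nonsing_inv_cancel_right _ _ hdet]⟩
end
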